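/- The k-algebra homomorphism k[x,y] → k[t] × k[y] sending x ↦ (t⁷, 0) and y ↦ (t³, y) has kernel exactly the principal ideal ((x³ − y⁷)x), and hence induces an injection of R = k[x,y]/((x³ − y⁷)x) into k[t] × k[y]. -/

import Mathlib

open Polynomial in
theorem aux_indep {k : Type*} [Field k] (b c d : Polynomial k)
    (h : expand k 3 b * X ^ 7 + expand k 3 c * X ^ 14 + expand k 3 d * X ^ 21 = 0) :
    b = 0 ∧ c = 0 ∧ d = 0 := by
  have h3 : 0 < 3 := by norm_num
  have key : ∀ n, (expand k 3 b * X ^ 7 + expand k 3 c * X ^ 14 + expand k 3 d * X ^ 21).coeff n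
      = 0 := by
    intro n; rw [h]; simp
  simp only [coeff_add, coeff_mul_X_pow', coeff_expand h3] at key
  refine ⟨?_, ?_, ?_⟩
  · ext n
    have := key (3 * n + 7)
    have e1 : ¬ (3 ∣ 3 * n + 7 - 14 ∧ 14 ≤ 3 * n + 7) := by omega
    have e2 : ¬ (3 ∣ 3 * n + 7 - 21 ∧ 21 ≤ 3 * n + 7) := by omega
    have e3 : (3 * n + 7 - 7) / 3 = n := by omega
    have e4 : 3 ∣ 3 * n + 7 - 7 := by omega
    rw [if_pos (by omega), if_pos e4, e3] at this
    simp only [← ite_and] at this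
    rw [if_neg (by tauto), if_neg (by tauto)] at this
    simpa using this
  · ext n
    have := key (3 * n + 14)
    have e1 : ¬ (3 ∣ 3 * n + 14 - 7 ∧ 7 ≤ 3 * n + 14) := by omega
    have e2 : ¬ (3 ∣ 3 * n + 14 - 21 ∧ 21 ≤ 3 * n + 14) := by omega
    have e3 : (3 * n + 14 - 14) / 3 = n := by omega
    have e4 : 3 ∣ 3 * n + 14 - 14 := by omega
    rw [if_pos (show 14 ≤ 3 * n + 14 by omega), if_pos e4, e3] at this
    simp only [← ite_and] at this
    rw [if_neg (by tauto), if_neg (by tauto)] at this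
    simpa using this
  · ext n
    have := key (3 * n + 21)
    have e1 : ¬ (3 ∣ 3 * n + 21 - 7 ∧ 7 ≤ 3 * n + 21) := by omega
    have e2 : ¬ (3 ∣ 3 * n + 21 - 14 ∧ 14 ≤ 3 * n + 21) := by omega
    have e3 : (3 * n + 21 - 21) / 3 = n := by omega
    have e4 : 3 ∣ 3 * n + 21 - 21 := by omega
    rw [if_pos (show 21 ≤ 3 * n + 21 by omega), if_pos e4, e3] at this
    simp only [← ite_and] at this
    rw [if_neg (by tauto), if_neg (by tauto)] at this
    simpa using this

open MvPolynomial in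
theorem aux_red {k : Type*} [Field k] (p : MvPolynomial (Fin 2) k) :
    ∃ (a b c d : Polynomial k) (q : MvPolynomial (Fin 2) k),
      p = q * (((X 0) ^ 3 - X 1 ^ 7) * X 0) + Polynomial.aeval (X 1) a
        + Polynomial.aeval (X 1) b * X 0 + Polynomial.aeval (X 1) c * X 0 ^ 2
        + Polynomial.aeval (X 1) d * X 0 ^ 3 := by
  induction p using MvPolynomial.induction_on with
  | C r => exact ⟨Polynomial.C r, 0, 0, 0, 0, by simp [MvPolynomial.algebraMap_eq]⟩
  | add p p' h h' =>
    obtain ⟨a, b, c, d, q, h⟩ := h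
    obtain ⟨a', b', c', d', q', h'⟩ := h'
    refine ⟨a + a', b + b', c + c', d + d', q + q', ?_⟩
    simp only [map_add]
    linear_combination h + h'
  | mul_X p i h =>
    obtain ⟨a, b, c, d, q, h⟩ := h
    fin_cases i
    · refine ⟨0, a + d * Polynomial.X ^ 7, b, c, q * X 0 + Polynomial.aeval (X 1) d, ?_⟩
      simp only [map_add, map_mul, map_pow, Polynomial.aeval_X, map_zero, Fin.zero_eta]
      linear_combination X 0 * h
    · refine ⟨a * Polynomial.X, b * Polynomial.X, c * Polynomial.X, d * Polynomial.X, q * X 1, ?_⟩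
      simp only [map_mul, Polynomial.aeval_X, Fin.mk_one]
      linear_combination X 1 * h

theorem stmt_16 (k : Type*) [Field k] :
    let φ : MvPolynomial (Fin 2) k →ₐ[k] Polynomial k × Polynomial k :=
      MvPolynomial.aeval
        ![((Polynomial.X : Polynomial k) ^ 7, 0), ((Polynomial.X : Polynomial k) ^ 3, Polynomial.X)]
    let I : Ideal (MvPolynomial (Fin 2) k) :=
      Ideal.span {((MvPolynomial.X 0 : MvPolynomial (Fin 2) k) ^ 3 - MvPolynomial.X 1 ^ 7) *
        MvPolynomial.X 0}
    RingHom.ker (φ : MvPolynomial (Fin 2) k →+* Polynomial k × Polynomial k) = I ∧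
      ∃ ψ : (MvPolynomial (Fin 2) k ⧸ I) →+* Polynomial k × Polynomial k,
        Function.Injective ψ ∧ ∀ p, ψ (Ideal.Quotient.mk I p) = φ p := by
  intro φ I
  have hx : φ (MvPolynomial.X 0) = (Polynomial.X ^ 7, 0) := by simp [φ]
  have hy : φ (MvPolynomial.X 1) = (Polynomial.X ^ 3, Polynomial.X) := by simp [φ]
  have hF : φ (((MvPolynomial.X 0 : MvPolynomial (Fin 2) k) ^ 3 - MvPolynomial.X 1 ^ 7) *
        MvPolynomial.X 0) = 0 := by
    rw [map_mul, map_sub, map_pow, map_pow, hx, hy]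
    ext1
    · simp; ring
    · simp
  have hg : ∀ a : Polynomial k, φ (Polynomial.aeval (MvPolynomial.X 1) a)
      = (Polynomial.expand k 3 a, a) := by
    intro a
    rw [← Polynomial.aeval_algHom_apply, hy, Polynomial.aeval_prod_apply]
    ext1
    · simp [Polynomial.expand_eq_sum, Polynomial.aeval_def, Polynomial.eval₂_eq_sum]
    · simp
  have hker : RingHom.ker (φ : MvPolynomial (Fin 2) k →+* Polynomial k × Polynomial k) = I := by
    apply le_antisymm
    · intro p hp
      have hp0 : φ p = 0 := hp
      obtain ⟨a, b, c, d, q, h⟩ := aux_red p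
      have h0 := hp0
      rw [h] at h0
      simp only [map_add, map_mul φ q, hF] at h0
      simp only [map_mul, map_pow, hx, hg] at h0
      have h1 := congrArg Prod.fst h0
      have h2 := congrArg Prod.snd h0
      simp at h1 h2
      subst h2
      obtain ⟨rfl, rfl, rfl⟩ := aux_indep b c d (by rw [← h1]; simp; ring)
      rw [h]
      simp only [map_zero, zero_mul, add_zero]
      exact Ideal.mul_mem_left _ _ (Ideal.subset_span rfl)
    · rw [Ideal.span_le]
      rintro _ rfl
      exact hF
  refine ⟨hker, Ideal.Quotient.lift I φ (fun a ha => ?_), ?_, fun p => rfl⟩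
  · rw [← hker] at ha; exact ha
  · apply RingHom.lift_injective_of_ker_le_ideal
    exact hker.le
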